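/- arXiv:1502.06159 — 2 statements merged into one kernel-verified Lean document; each statement's English description precedes it below -/
import Mathlib

section
/- Let X and Y be normed linear spaces, (x̄,ȳ) ∈ X×Y, and f : X×Y → ℝ∪{+∞} with f(x̄,ȳ)=0 satisfying (P1) and (P2). Then for every ρ>0 and every (x,y) ∈ X×Y with f(x,y) < ∞, the ρ-slope is estimated by the subdifferential ρ²-slope: |∇f|_ρ(x,y) ≤ |∂f|_{ρ²}(x,y) + ρ. -/
open Filter Metric Set Topology ENNReal

/-- The parametric metric `d_ρ((x,y),(u,v)) = max{‖x−u‖, ρ‖y−v‖}` on a product. -/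
noncomputable def dRho {X Y : Type*} [NormedAddCommGroup X] [NormedAddCommGroup Y]
    (ρ : ℝ) (p q : X × Y) : ℝ :=
  max (dist p.1 q.1) (ρ * dist p.2 q.2)

/-- The (local) ρ-slope `|∇f|_ρ(x,y)` of `f` at `p = (x,y)`. -/
noncomputable def slopeRho {X Y : Type*} [NormedAddCommGroup X] [NormedAddCommGroup Y]
    (f : X × Y → EReal) (ρ : ℝ) (p : X × Y) : ℝ≥0∞ :=
  Filter.limsup
    (fun q => ENNReal.ofReal (max ((f p - f q).toReal) 0) / ENNReal.ofReal (dRho ρ q p))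
    (𝓝[≠] p)

/-- The Fréchet subdifferential of an extended-real-valued function on a product of
normed spaces, as a set of pairs of continuous linear functionals: `(x*,y*) ∈ ∂f(x,y)`
iff `f(x,y)` is finite and
`liminf_{(u,v)→(x,y)} [f(u,v)−f(x,y)−⟨x*,u−x⟩−⟨y*,v−y⟩]/‖(u,v)−(x,y)‖ ≥ 0`
(expressed in the equivalent ε-form). -/
def prodFSubdiff {X Y : Type*} [NormedAddCommGroup X] [NormedSpace ℝ X]
    [NormedAddCommGroup Y] [NormedSpace ℝ Y]
    (f : X × Y → EReal) (p : X × Y) : Set ((X →L[ℝ] ℝ) × (Y →L[ℝ] ℝ)) :=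
  {s | f p ≠ ⊤ ∧ ∀ ε : ℝ, 0 < ε → ∀ᶠ q : X × Y in 𝓝 p,
    f p + ((s.1 (q.1 - p.1) + s.2 (q.2 - p.2) - ε * ‖q - p‖ : ℝ) : EReal) ≤ f q}

/-- The subdifferential ρ-slope `|∂f|_ρ(x,y) = inf{‖x*‖ : (x*,y*) ∈ ∂f(x,y), ‖y*‖ < ρ}`. -/
noncomputable def subdiffSlopeRho {X Y : Type*} [NormedAddCommGroup X] [NormedSpace ℝ X]
    [NormedAddCommGroup Y] [NormedSpace ℝ Y]
    (f : X × Y → EReal) (ρ : ℝ) (p : X × Y) : ℝ≥0∞ :=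
  ⨅ (s : (X →L[ℝ] ℝ) × (Y →L[ℝ] ℝ)) (_ : s ∈ prodFSubdiff f p ∧ ‖s.2‖ < ρ),
    ENNReal.ofReal ‖s.1‖

/-!
If `(x*, y*)` is a Fréchet subgradient of `f` at `p`, then up to `o(‖q - p‖)`
`f p - f q ≤ -⟨x*, q.1 - p.1⟩ - ⟨y*, q.2 - p.2⟩ ≤ (‖x*‖ + ‖y*‖ / ρ) * d_ρ(q, p)`,
and `‖q - p‖` is comparable to `d_ρ(q, p)`, so the `ρ`-slope of `f` at `p` is at most
`‖x*‖ + ‖y*‖ / ρ`. Now take the infimum over the subgradients with `‖y*‖ < ρ²`.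
-/

section ParametricMetric

variable {X Y : Type*} [NormedAddCommGroup X] [NormedAddCommGroup Y] {ρ : ℝ}

theorem dist_fst_le_dRho (ρ : ℝ) (p q : X × Y) : dist p.1 q.1 ≤ dRho ρ p q :=
  le_max_left _ _

theorem dRho_nonneg (ρ : ℝ) (p q : X × Y) : 0 ≤ dRho ρ p q :=
  dist_nonneg.trans (dist_fst_le_dRho ρ p q)

theorem dist_snd_le_dRho_div (hρ : 0 < ρ) (p q : X × Y) : dist p.2 q.2 ≤ dRho ρ p q / ρ :=
  (le_div_iff₀' hρ).2 (le_max_right _ _)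

theorem dist_le_mul_dRho (hρ : 0 < ρ) (p q : X × Y) :
    dist p q ≤ (1 + 1 / ρ) * dRho ρ p q := by
  calc dist p q ≤ dist p.1 q.1 + dist p.2 q.2 := max_le_add_of_nonneg dist_nonneg dist_nonneg
    _ ≤ dRho ρ p q + dRho ρ p q / ρ :=
      add_le_add (dist_fst_le_dRho ρ p q) (dist_snd_le_dRho_div hρ p q)
    _ = (1 + 1 / ρ) * dRho ρ p q := by ring

theorem slopeRho_le_ofReal_of_eventually_sub_le {f : X × Y → EReal} {p : X × Y} {K : ℝ}
    (hK : 0 ≤ K) (h : ∀ᶠ q in 𝓝[≠] p, f p - f q ≤ ((K * dRho ρ q p : ℝ) : EReal)) :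
    slopeRho f ρ p ≤ ENNReal.ofReal K := by
  refine limsup_le_of_le (h := ?_)
  filter_upwards [h] with q hq
  have hKd : 0 ≤ K * dRho ρ q p := mul_nonneg hK (dRho_nonneg ρ q p)
  have toReal_le : (f p - f q).toReal ≤ K * dRho ρ q p := by
    rcases eq_or_ne (f p - f q) ⊥ with hbot | hbot
    · simpa only [hbot, EReal.toReal_bot] using hKd
    · exact EReal.toReal_le_toReal hq hbot (EReal.coe_ne_top _)
  refine ENNReal.div_le_of_le_mul ?_
  rw [← ENNReal.ofReal_mul hK]
  exact ENNReal.ofReal_le_ofReal (max_le toReal_le hKd)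

end ParametricMetric

section Subdifferential

variable {X Y : Type*} [NormedAddCommGroup X] [NormedSpace ℝ X]
  [NormedAddCommGroup Y] [NormedSpace ℝ Y] {ρ : ℝ}

theorem abs_add_apply_sub_le_mul_dRho (hρ : 0 < ρ) (s : (X →L[ℝ] ℝ) × (Y →L[ℝ] ℝ))
    (p q : X × Y) :
    |s.1 (q.1 - p.1) + s.2 (q.2 - p.2)| ≤ (‖s.1‖ + ‖s.2‖ / ρ) * dRho ρ q p := by
  calc |s.1 (q.1 - p.1) + s.2 (q.2 - p.2)|
      ≤ |s.1 (q.1 - p.1)| + |s.2 (q.2 - p.2)| := abs_add_le _ _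
    _ ≤ ‖s.1‖ * dist q.1 p.1 + ‖s.2‖ * dist q.2 p.2 := by
      rw [dist_eq_norm, dist_eq_norm]
      exact add_le_add (s.1.le_opNorm _) (s.2.le_opNorm _)
    _ ≤ ‖s.1‖ * dRho ρ q p + ‖s.2‖ * (dRho ρ q p / ρ) := by
      gcongr
      · exact dist_fst_le_dRho ρ q p
      · exact dist_snd_le_dRho_div hρ q p
    _ = (‖s.1‖ + ‖s.2‖ / ρ) * dRho ρ q p := by ring

theorem eventually_sub_le_of_mem_prodFSubdiff {f : X × Y → EReal} {p : X × Y}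
    {s : (X →L[ℝ] ℝ) × (Y →L[ℝ] ℝ)} (hs : s ∈ prodFSubdiff f p) (hρ : 0 < ρ)
    {δ : ℝ} (hδ : 0 < δ) :
    ∀ᶠ q in 𝓝 p, f p - f q ≤ (((‖s.1‖ + ‖s.2‖ / ρ + δ) * dRho ρ q p : ℝ) : EReal) := by
  have hk : 0 < 1 + 1 / ρ := by positivity
  filter_upwards [hs.2 (δ / (1 + 1 / ρ)) (div_pos hδ hk)] with q hq
  have linear_le := (abs_le.1 (abs_add_apply_sub_le_mul_dRho hρ s p q)).1
  have error_le : δ / (1 + 1 / ρ) * ‖q - p‖ ≤ δ * dRho ρ q p := by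
    rw [div_mul_eq_mul_div, div_le_iff₀ hk, ← dist_eq_norm]
    calc δ * dist q p ≤ δ * ((1 + 1 / ρ) * dRho ρ q p) := by
          gcongr
          exact dist_le_mul_dRho hρ q p
      _ = δ * dRho ρ q p * (1 + 1 / ρ) := by ring
  refine EReal.sub_le_of_le_add' ?_
  calc f p ≤ f q - ((s.1 (q.1 - p.1) + s.2 (q.2 - p.2) - δ / (1 + 1 / ρ) * ‖q - p‖ : ℝ) : EReal) :=
        (EReal.le_sub_iff_add_le (.inl (EReal.coe_ne_bot _)) (.inl (EReal.coe_ne_top _))).2 hq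
    _ = f q + ((-(s.1 (q.1 - p.1) + s.2 (q.2 - p.2) - δ / (1 + 1 / ρ) * ‖q - p‖) : ℝ) : EReal) := by
      rw [EReal.coe_neg, sub_eq_add_neg]
    _ ≤ f q + (((‖s.1‖ + ‖s.2‖ / ρ + δ) * dRho ρ q p : ℝ) : EReal) := by
      gcongr
      linarith

theorem slopeRho_le_of_mem_prodFSubdiff {f : X × Y → EReal} {p : X × Y}
    {s : (X →L[ℝ] ℝ) × (Y →L[ℝ] ℝ)} (hs : s ∈ prodFSubdiff f p) (hρ : 0 < ρ) :
    slopeRho f ρ p ≤ ENNReal.ofReal (‖s.1‖ + ‖s.2‖ / ρ) := by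
  refine ENNReal.le_of_forall_pos_le_add fun δ hδ _ => ?_
  rw [← ENNReal.ofReal_coe_nnreal, ← ENNReal.ofReal_add (by positivity) δ.coe_nonneg]
  exact slopeRho_le_ofReal_of_eventually_sub_le (by positivity)
    (nhdsWithin_le_nhds (eventually_sub_le_of_mem_prodFSubdiff hs hρ hδ))

theorem slope_le_subdiff_slope_general (f : X × Y → EReal) (hρ : 0 < ρ) (r : ℝ) (p : X × Y) :
    slopeRho f ρ p ≤ subdiffSlopeRho f r p + ENNReal.ofReal (r / ρ) := by
  simp only [subdiffSlopeRho, ENNReal.iInf_add]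
  refine le_iInf₂ fun s ⟨hs, hsr⟩ => ?_
  calc slopeRho f ρ p ≤ ENNReal.ofReal (‖s.1‖ + ‖s.2‖ / ρ) := slopeRho_le_of_mem_prodFSubdiff hs hρ
    _ ≤ ENNReal.ofReal (‖s.1‖ + r / ρ) := by gcongr
    _ ≤ ENNReal.ofReal ‖s.1‖ + ENNReal.ofReal (r / ρ) := ENNReal.ofReal_add_le

end Subdifferential

/-- Proposition "Relationships between slopes" (iv):
`|∇f|_ρ(x,y) ≤ |∂f|_{ρ²}(x,y) + ρ` for all `ρ > 0` and all `(x,y)` with `f(x,y) < ∞`. -/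
theorem slope_le_subdiff_slope {X Y : Type*}
    [NormedAddCommGroup X] [NormedSpace ℝ X] [NormedAddCommGroup Y] [NormedSpace ℝ Y]
    (xbar : X) (ybar : Y) (f : X × Y → EReal)
    (hfbot : ∀ p : X × Y, f p ≠ ⊥)
    (hf0 : f (xbar, ybar) = 0)
    (hP1 : ∀ p : X × Y, p.2 ≠ ybar → 0 < f p)
    (hP2 : ∃ c : ℝ, 0 < c ∧ ∃ ε : ℝ, 0 < ε ∧ ∀ p : X × Y,
      0 < f p → f p < (ε : EReal) → ((c * dist p.2 ybar : ℝ) : EReal) ≤ f p)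
    (ρ : ℝ) (hρ : 0 < ρ) (p : X × Y) (hfp : f p < ⊤) :
    slopeRho f ρ p ≤ subdiffSlopeRho f (ρ ^ 2) p + ENNReal.ofReal ρ := by
  have h := slope_le_subdiff_slope_general f hρ (ρ ^ 2) p
  rwa [sq, mul_self_div_self, ← sq] at h
end

section
/- Let X and Y be normed linear spaces, (x̄,ȳ) ∈ X×Y, and f : X×Y → ℝ∪{+∞} with f(x̄,ȳ)=0 satisfying (P1) and (P2). If f is convex, then all the strict slopes coincide: |∇f|^>(x̄,ȳ) = |∂f|^>(x̄,ȳ) and |∇f|^{>+}(x̄,ȳ) = |∂f|^{>+}(x̄,ȳ); moreover, for all ρ>0 and all (x,y) with 0<f(x,y)<∞ one has |∇f|_ρ^◇(x,y) = max{ |∇f|_ρ(x,y), f(x,y)/d_ρ((x,y),(x̄,ȳ)) }, and |∇f|^◇(x̄,ȳ) = |∇f|^{>+}(x̄,ȳ) = |∇f|^>(x̄,ȳ). -/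
open Filter Metric Set Topology ENNReal

/-- The strict outer slope `|∇f|^>(x̄,ȳ)`. -/
noncomputable def strictOuterSlope {X Y : Type*} [NormedAddCommGroup X] [NormedAddCommGroup Y]
    (f : X × Y → EReal) (xbar : X) (ybar : Y) : ℝ≥0∞ :=
  ⨆ (ρ : ℝ) (_ : 0 < ρ),
    ⨅ (p : X × Y) (_ : dist p.1 xbar < ρ ∧ 0 < f p ∧ f p < (ρ : EReal)),
      slopeRho f ρ p

/-- The modified strict outer slope `|∇f|^{>+}(x̄,ȳ)`. -/
noncomputable def modStrictOuterSlope {X Y : Type*} [NormedAddCommGroup X] [NormedAddCommGroup Y]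
    (f : X × Y → EReal) (xbar : X) (ybar : Y) : ℝ≥0∞ :=
  ⨆ (ρ : ℝ) (_ : 0 < ρ),
    ⨅ (p : X × Y) (_ : dist p.1 xbar < ρ ∧ 0 < f p ∧ f p < (ρ : EReal)),
      max (slopeRho f ρ p)
        (ENNReal.ofReal ((f p).toReal) / ENNReal.ofReal (dist p.1 xbar))

/-- The strict outer subdifferential slope `|∂f|^>(x̄,ȳ)`. -/
noncomputable def strictOuterSubdiffSlope {X Y : Type*} [NormedAddCommGroup X] [NormedSpace ℝ X]
    [NormedAddCommGroup Y] [NormedSpace ℝ Y]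
    (f : X × Y → EReal) (xbar : X) (ybar : Y) : ℝ≥0∞ :=
  ⨆ (ρ : ℝ) (_ : 0 < ρ),
    ⨅ (p : X × Y) (_ : dist p.1 xbar < ρ ∧ 0 < f p ∧ f p < (ρ : EReal)),
      subdiffSlopeRho f ρ p

/-- The modified strict outer subdifferential slope `|∂f|^{>+}(x̄,ȳ)`. -/
noncomputable def modStrictOuterSubdiffSlope {X Y : Type*} [NormedAddCommGroup X] [NormedSpace ℝ X]
    [NormedAddCommGroup Y] [NormedSpace ℝ Y]
    (f : X × Y → EReal) (xbar : X) (ybar : Y) : ℝ≥0∞ :=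
  ⨆ (ρ : ℝ) (_ : 0 < ρ),
    ⨅ (p : X × Y) (_ : dist p.1 xbar < ρ ∧ 0 < f p ∧ f p < (ρ : EReal)),
      max (subdiffSlopeRho f ρ p)
        (ENNReal.ofReal ((f p).toReal) / ENNReal.ofReal (dist p.1 xbar))


/-- The nonlocal ρ-slope `|∇f|_ρ^◇(x,y)` of `f` at `p = (x,y)`. -/
noncomputable def nonlocalSlopeRho {X Y : Type*} [NormedAddCommGroup X] [NormedAddCommGroup Y]
    (f : X × Y → EReal) (ρ : ℝ) (p : X × Y) : ℝ≥0∞ :=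
  ⨆ (q : X × Y) (_ : q ≠ p),
    ENNReal.ofReal (max ((f p - max (f q) 0).toReal) 0) / ENNReal.ofReal (dRho ρ p q)

/-- The uniform strict outer slope `|∇f|^◇(x̄,ȳ)`. -/
noncomputable def uniformStrictOuterSlope {X Y : Type*} [NormedAddCommGroup X] [NormedAddCommGroup Y]
    (f : X × Y → EReal) (xbar : X) (ybar : Y) : ℝ≥0∞ :=
  ⨆ (ρ : ℝ) (_ : 0 < ρ),
    ⨅ (p : X × Y) (_ : dist p.1 xbar < ρ ∧ 0 < f p ∧ f p < (ρ : EReal)),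
      nonlocalSlopeRho f ρ p

/-!
For convex `f`, a bound `|∇f|_ρ(p) ≤ γ` is equivalent to the global inequality
`f p ≤ f q + γ d_ρ(q, p)` for all `q`: the function `f + γ d_ρ(·, p)` is convex, so that its local
minimality at `p` is global. Three consequences give the theorem.

* If `f p > 0`, replacing `f` by `f₊` in the inequality loses nothing: when `f q < 0`, test it at
  the point of the segment `[p, q]` where the linear interpolation of `f` vanishes. Hence the
  nonlocal slope is the local one, and testing at `(x̄, ȳ)` bounds `f p / d_ρ(p, (x̄, ȳ))` by it.
* By the sandwich theorem, an affine function separates `f p - γ d_ρ(·, p)` from `f`. Its linear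
  part is a subgradient `(x*, y*)` with `‖x*‖ ≤ γ` and `‖y*‖ ≤ γρ`. Conversely, a subgradient
  bounds the slope by `‖x*‖ + ‖y*‖ / ρ`. Comparing the two slopes at different radii, one much
  smaller than the other, makes the contribution of `y*` arbitrarily small.
* By (P2) the term `ρ‖y - ȳ‖` of `d_ρ` is negligible against `f p` for small `ρ`, so `‖x - x̄‖` may
  replace `d_ρ(p, (x̄, ȳ))`.
-/

open scoped NNReal

section ExtendedReals

lemma ofReal_max_sub_div_le_iff {u v : EReal} {d : ℝ} {γ : ℝ≥0}
    (hu : u ≠ ⊤) (hv : v ≠ ⊥) (hd : 0 < d) :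
    ENNReal.ofReal (max (u - v).toReal 0) / ENNReal.ofReal d ≤ γ ↔
      u ≤ v + ((γ * d : ℝ) : EReal) := by
  induction u with
  | top => exact absurd rfl hu
  | bot => simp
  | coe a =>
    induction v with
    | bot => exact absurd rfl hv
    | top => simp [-EReal.coe_mul]
    | coe b =>
      rw [← EReal.coe_sub, EReal.toReal_coe, ← EReal.coe_add, EReal.coe_le_coe_iff,
        ← ENNReal.ofReal_div_of_pos hd, ← ENNReal.ofReal_coe_nnreal,
        ENNReal.ofReal_le_ofReal_iff γ.coe_nonneg, div_le_iff₀ hd, max_le_iff,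
        and_iff_left (mul_nonneg γ.coe_nonneg hd.le), sub_le_iff_le_add']

lemma ofReal_toReal_div_le {u : EReal} {d : ℝ} {γ : ℝ≥0} (h : u ≤ ((γ * d : ℝ) : EReal)) :
    ENNReal.ofReal u.toReal / ENNReal.ofReal d ≤ γ := by
  induction u with
  | top => exact absurd (top_le_iff.1 h) (EReal.coe_ne_top _)
  | bot => simp
  | coe a =>
    refine ENNReal.div_le_of_le_mul ?_
    rw [← ENNReal.ofReal_coe_nnreal, ← ENNReal.ofReal_mul γ.coe_nonneg]
    exact ENNReal.ofReal_le_ofReal (EReal.coe_le_coe_iff.1 h)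

lemma add_coe_le_iff_le_add_neg {u v : EReal} {a : ℝ} :
    u + (a : EReal) ≤ v ↔ u ≤ v + ((-a : ℝ) : EReal) := by
  rw [EReal.coe_neg, ← sub_eq_add_neg,
    EReal.le_sub_iff_add_le (.inl (EReal.coe_ne_bot a)) (.inl (EReal.coe_ne_top a))]

lemma le_add_coe_of_forall_pos_mul {u v : EReal} {a b : ℝ}
    (h : ∀ ε : ℝ, 0 < ε → u ≤ v + ((a + ε * b : ℝ) : EReal)) : u ≤ v + (a : EReal) := by
  have hcont : ContinuousAt (fun ε : ℝ => v + ((a + ε * b : ℝ) : EReal)) 0 :=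
    ContinuousAt.comp (g := fun z : EReal × EReal => z.1 + z.2)
      (EReal.continuousAt_add (.inr (EReal.coe_ne_bot _)) (.inr (EReal.coe_ne_top _)))
      (continuousAt_const.prodMk (continuous_coe_real_ereal.comp (by fun_prop)).continuousAt)
  have hlim : Tendsto (fun ε : ℝ => v + ((a + ε * b : ℝ) : EReal)) (𝓝[>] 0) (𝓝 (v + a)) := by
    simpa using hcont.tendsto.mono_left nhdsWithin_le_nhds
  exact ge_of_tendsto hlim (eventually_mem_nhdsWithin.mono h)

lemma ennreal_le_of_forall_nnreal_ge {a b : ℝ≥0∞} (h : ∀ γ : ℝ≥0, b ≤ γ → a ≤ γ) : a ≤ b := by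
  induction b with
  | top => exact le_top
  | coe γ => exact h γ le_rfl

end ExtendedReals

/-- Convexity of a function with values in `ℝ ∪ {+∞}`. The value `-∞` is excluded so that no sum
`(+∞) + (-∞)` occurs on the right-hand side of the convexity inequality. -/
structure ERealConvex {E : Type*} [AddCommGroup E] [Module ℝ E] (f : E → EReal) : Prop where
  ne_bot : ∀ p, f p ≠ ⊥
  map_combo_le : ∀ p q : E, ∀ t : ℝ, 0 ≤ t → t ≤ 1 →
    f (t • p + (1 - t) • q) ≤ (t : EReal) * f p + ((1 - t : ℝ) : EReal) * f q

lemma convexOn_combo_le_mul_of_eq_zero {E : Type*} [AddCommGroup E] [Module ℝ E] {g : E → ℝ}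
    (hg : ConvexOn ℝ univ g) {p : E} (hgp : g p = 0) (q : E) {t : ℝ} (ht₀ : 0 ≤ t) (ht₁ : t ≤ 1) :
    g (t • q + (1 - t) • p) ≤ t * g q := by
  simpa [hgp] using hg.2 (mem_univ q) (mem_univ p) ht₀ (sub_nonneg.2 ht₁) (by ring)

section NonverticalHyperplane

variable {E : Type*} [AddCommGroup E] [Module ℝ E] [TopologicalSpace E]

lemma map_prodMk_eq_add_mul (φ : E × ℝ →L[ℝ] ℝ) (q : E) (t : ℝ) :
    φ (q, t) = φ (q, 0) + t * φ (0, 1) := by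
  rw [← smul_eq_mul, ← map_smul, ← map_add]
  simp

lemma exists_affine_lt_iff_map_prodMk_lt (φ : E × ℝ →L[ℝ] ℝ) (u : ℝ) (hφ : 0 < φ (0, 1)) :
    ∃ (L : E →L[ℝ] ℝ) (c : ℝ), ∀ q t, t < L q + c ↔ φ (q, t) < u := by
  refine ⟨-(φ (0, 1))⁻¹ • φ.comp (.inl ℝ E ℝ), u / φ (0, 1), fun q t => ?_⟩
  have hgraph : (-(φ (0, 1))⁻¹ • φ.comp (.inl ℝ E ℝ)) q + u / φ (0, 1) =
      (u - φ (q, 0)) / φ (0, 1) := by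
    simp only [smul_apply, ContinuousLinearMap.comp_apply, ContinuousLinearMap.inl_apply,
      smul_eq_mul]
    ring
  rw [hgraph, lt_div_iff₀ hφ, map_prodMk_eq_add_mul φ q t, lt_sub_iff_add_lt']

end NonverticalHyperplane

namespace ERealConvex

section Algebraic

variable {E : Type*} [AddCommGroup E] [Module ℝ E] {f : E → EReal} {g : E → ℝ} {p q : E}

lemma exists_eq_coe (hf : ERealConvex f) (hp : f p ≠ ⊤) : ∃ a : ℝ, f p = a :=
  ⟨(f p).toReal, (EReal.coe_toReal hp (hf.ne_bot p)).symm⟩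

lemma map_combo_le_coe (hf : ERealConvex f) {a b t : ℝ} (hp : f p ≤ a) (hq : f q ≤ b)
    (ht₀ : 0 ≤ t) (ht₁ : t ≤ 1) :
    f (t • p + (1 - t) • q) ≤ ((t * a + (1 - t) * b : ℝ) : EReal) := by
  calc f (t • p + (1 - t) • q)
      ≤ (t : EReal) * f p + ((1 - t : ℝ) : EReal) * f q := hf.map_combo_le p q t ht₀ ht₁
    _ ≤ (t : EReal) * a + ((1 - t : ℝ) : EReal) * b :=
        add_le_add (mul_le_mul_of_nonneg_left hp (EReal.coe_nonneg.2 ht₀))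
          (mul_le_mul_of_nonneg_left hq (EReal.coe_nonneg.2 (sub_nonneg.2 ht₁)))
    _ = ((t * a + (1 - t) * b : ℝ) : EReal) := by push_cast; rfl

lemma convex_epigraph (hf : ERealConvex f) : Convex ℝ {z : E × ℝ | f z.1 ≤ z.2} := by
  intro z hz w hw s t hs ht hst
  obtain rfl : t = 1 - s := by linarith
  exact hf.map_combo_le_coe hz hw hs (by linarith)

lemma le_add_of_le_max_add (hf : ERealConvex f) (hg : ConvexOn ℝ univ g) (hgp : g p = 0)
    (hp : 0 < f p) (h : ∀ q, f p ≤ max (f q) 0 + (g q : EReal)) (q : E) :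
    f p ≤ f q + (g q : EReal) := by
  rcases le_or_gt 0 (f q) with hq | hq
  · simpa only [max_eq_left hq] using h q
  have hp_le : f p ≤ (g q : EReal) := by simpa only [max_eq_right hq.le, zero_add] using h q
  obtain ⟨a, ha⟩ := hf.exists_eq_coe (hp_le.trans_lt (EReal.coe_lt_top _)).ne
  obtain ⟨b, hb⟩ := hf.exists_eq_coe hq.ne_top
  rw [ha] at hp
  rw [hb] at hq
  have ha₀ : 0 < a := by exact_mod_cast hp
  have hb₀ : b < 0 := by exact_mod_cast hq
  have hab : 0 < a - b := by linarith
  set t := a / (a - b) with ht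
  have ht₀ : 0 < t := div_pos ha₀ hab
  have ht₁ : t ≤ 1 := (div_le_one hab).2 (by linarith)
  have hzero : t * b + (1 - t) * a = 0 := by rw [ht]; field_simp; ring
  have hfz : f (t • q + (1 - t) • p) ≤ 0 := by
    simpa only [hzero, EReal.coe_zero] using hf.map_combo_le_coe hb.le ha.le ht₀.le ht₁
  have hagz : a ≤ g (t • q + (1 - t) • p) := by
    simpa only [ha, max_eq_right hfz, zero_add, EReal.coe_le_coe_iff] using
      h (t • q + (1 - t) • p)
  have hatg : a ≤ t * g q := hagz.trans (convexOn_combo_le_mul_of_eq_zero hg hgp q ht₀.le ht₁)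
  have hmul : t * (a - b) ≤ t * g q := by rwa [ht, div_mul_cancel₀ _ hab.ne', ← ht]
  have hreal : a ≤ b + g q := by linarith [le_of_mul_le_mul_left hmul ht₀]
  rw [ha, hb]
  exact_mod_cast hreal

end Algebraic

section Topological

variable {E : Type*} [AddCommGroup E] [Module ℝ E] [TopologicalSpace E] [IsTopologicalAddGroup E]
  [ContinuousSMul ℝ E] {f : E → EReal} {g : E → ℝ} {p : E}

lemma le_add_of_eventually_le_add (hf : ERealConvex f) (hg : ConvexOn ℝ univ g) (hgp : g p = 0)
    (hp : f p ≠ ⊤) (h : ∀ᶠ q in 𝓝 p, f p ≤ f q + (g q : EReal)) (q : E) :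
    f p ≤ f q + (g q : EReal) := by
  by_cases hq : f q = ⊤
  · simp [hq]
  obtain ⟨a, ha⟩ := hf.exists_eq_coe hp
  obtain ⟨b, hb⟩ := hf.exists_eq_coe hq
  have hsegment : Tendsto (fun t : ℝ => t • q + (1 - t) • p) (𝓝[>] 0) (𝓝 p) := by
    have hcont : Continuous fun t : ℝ => t • q + (1 - t) • p := by fun_prop
    simpa using (hcont.tendsto 0).mono_left nhdsWithin_le_nhds
  have hsmall : ∀ᶠ t : ℝ in 𝓝[>] 0, t ∈ Ioo 0 1 := Ioo_mem_nhdsGT one_pos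
  obtain ⟨t, hpz, ht₀, ht₁⟩ := ((hsegment.eventually h).and hsmall).exists
  have hdescent : a ≤ t * b + (1 - t) * a + t * g q := by
    have hle : f p ≤ ((t * b + (1 - t) * a : ℝ) : EReal) + ((t * g q : ℝ) : EReal) :=
      hpz.trans (add_le_add (hf.map_combo_le_coe hb.le ha.le ht₀.le ht₁.le)
        (EReal.coe_le_coe_iff.2 (convexOn_combo_le_mul_of_eq_zero hg hgp q ht₀.le ht₁.le)))
    rw [ha] at hle
    exact_mod_cast hle
  have hreal : a ≤ b + g q := le_of_mul_le_mul_left (by linarith) ht₀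
  rw [ha, hb]
  exact_mod_cast hreal

theorem exists_affine_between (hf : ERealConvex f) (hp : f p ≠ ⊤) (hg : ConcaveOn ℝ univ g)
    (hg_cont : Continuous g) (hgf : ∀ q, (g q : EReal) ≤ f q) :
    ∃ (L : E →L[ℝ] ℝ) (c : ℝ), ∀ q, g q ≤ L q + c ∧ ((L q + c : ℝ) : EReal) ≤ f q := by
  have hhypo_convex : Convex ℝ {z : E × ℝ | z.2 < g z.1} := by
    simpa only [mem_univ, true_and] using hg.convex_strict_hypograph
  have hhypo_open : IsOpen {z : E × ℝ | z.2 < g z.1} := isOpen_lt (by fun_prop) (by fun_prop)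
  have hdisj : Disjoint {z : E × ℝ | z.2 < g z.1} {z : E × ℝ | f z.1 ≤ z.2} :=
    Set.disjoint_left.2 fun z hz hz' => (EReal.coe_le_coe_iff.1 ((hgf z.1).trans hz')).not_gt hz
  obtain ⟨φ, u, hhypo, hepi⟩ :=
    geometric_hahn_banach_open hhypo_convex hhypo_open hf.convex_epigraph hdisj
  have hvertical : 0 < φ (0, 1) := by
    obtain ⟨a, ha⟩ := hf.exists_eq_coe hp
    have hga : g p ≤ a := EReal.coe_le_coe_iff.1 (ha ▸ hgf p)
    have hbelow : φ (p, g p - 1) < u := hhypo _ (by simp)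
    have habove : u ≤ φ (p, a) := hepi _ (by simp [ha])
    rw [map_prodMk_eq_add_mul] at hbelow habove
    have hpos : 0 < (a - g p + 1) * φ (0, 1) := by linarith
    exact pos_of_mul_pos_right hpos (by linarith)
  obtain ⟨L, c, hLc⟩ := exists_affine_lt_iff_map_prodMk_lt φ u hvertical
  refine ⟨L, c, fun q => ⟨le_of_forall_lt fun t ht => (hLc q t).2 (hhypo (q, t) ht), ?_⟩⟩
  by_cases hq : f q = ⊤
  · simp [hq]
  obtain ⟨b, hb⟩ := hf.exists_eq_coe hq
  have hle : u ≤ φ (q, b) := hepi _ (by simp [hb])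
  rw [hb, EReal.coe_le_coe_iff]
  exact not_lt.1 (mt (hLc q b).1 hle.not_gt)

lemma exists_subgradient_ge_neg (hf : ERealConvex f) (hp : f p ≠ ⊤) (hg : ConvexOn ℝ univ g)
    (hg_cont : Continuous g) (hgp : g p = 0) (h : ∀ q, f p ≤ f q + (g q : EReal)) :
    ∃ L : E →L[ℝ] ℝ, ∀ q,
      f p + ((L (q - p) : ℝ) : EReal) ≤ f q ∧ -g q ≤ L (q - p) := by
  obtain ⟨a, ha⟩ := hf.exists_eq_coe hp
  have hminorant : ∀ q, ((a - g q : ℝ) : EReal) ≤ f q := fun q => by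
    rw [sub_eq_add_neg, EReal.coe_add, add_coe_le_iff_le_add_neg, neg_neg, ← ha]
    exact h q
  obtain ⟨L, c, hLc⟩ := hf.exists_affine_between hp ((concaveOn_const a convex_univ).sub hg)
    (continuous_const.sub hg_cont) hminorant
  have hcontact : L p + c = a := by
    refine le_antisymm (EReal.coe_le_coe_iff.1 (ha ▸ (hLc p).2)) ?_
    simpa [hgp] using (hLc p).1
  have hL : ∀ q, a + L (q - p) = L q + c := fun q => by rw [map_sub]; linarith
  refine ⟨L, fun q => ⟨?_, ?_⟩⟩
  · rw [ha, ← EReal.coe_add, hL]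
    exact (hLc q).2
  · have hge : a - g q ≤ L q + c := (hLc q).1
    linarith [hL q]

end Topological

end ERealConvex

section ParametricDistance

variable {X Y : Type*} [NormedAddCommGroup X] [NormedAddCommGroup Y] {ρ : ℝ} {p q : X × Y}

lemma dRho_comm (ρ : ℝ) (p q : X × Y) : dRho ρ p q = dRho ρ q p := by
  simp only [dRho, dist_comm]

lemma dRho_self (ρ : ℝ) (p : X × Y) : dRho ρ p p = 0 := by simp [dRho]

lemma dRho_pos (hρ : 0 < ρ) (h : p ≠ q) : 0 < dRho ρ p q := by
  by_cases h₁ : p.1 = q.1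
  · have h₂ : p.2 ≠ q.2 := fun h₂ => h (Prod.ext h₁ h₂)
    exact lt_max_of_lt_right (mul_pos hρ (dist_pos.2 h₂))
  · exact lt_max_of_lt_left (dist_pos.2 h₁)

lemma dRho_mono_left {ρ' : ℝ} (h : ρ ≤ ρ') (p q : X × Y) : dRho ρ p q ≤ dRho ρ' p q :=
  max_le_max le_rfl (mul_le_mul_of_nonneg_right h dist_nonneg)

lemma continuous_dRho_left (ρ : ℝ) (p : X × Y) : Continuous fun q => dRho ρ q p := by
  unfold dRho
  fun_prop

lemma convexOn_dRho_left [NormedSpace ℝ X] [NormedSpace ℝ Y] (hρ : 0 ≤ ρ) (p : X × Y) :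
    ConvexOn ℝ univ fun q => dRho ρ q p :=
  ((convexOn_univ_dist p.1).comp_linearMap (LinearMap.fst ℝ X Y)).sup
    (((convexOn_univ_dist p.2).comp_linearMap (LinearMap.snd ℝ X Y)).smul hρ)

end ParametricDistance

section Slopes

variable {X Y : Type*} [NormedAddCommGroup X] [NormedAddCommGroup Y] {f : X × Y → EReal}
  {ρ : ℝ} {p : X × Y} {γ : ℝ≥0}

lemma slopeRho_antitone (f : X × Y → EReal) (p : X × Y) : Antitone fun ρ => slopeRho f ρ p :=
  fun _ _ h => limsup_le_limsup <| .of_forall fun q =>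
    ENNReal.div_le_div_left (ENNReal.ofReal_le_ofReal (dRho_mono_left h q p)) _

lemma slopeRho_le_of_forall (hbot : ∀ q, f q ≠ ⊥) (hρ : 0 < ρ) (hp : f p ≠ ⊤)
    (h : ∀ q, f p ≤ f q + ((γ * dRho ρ q p : ℝ) : EReal)) : slopeRho f ρ p ≤ γ :=
  limsup_le_of_le (h := eventually_mem_nhdsWithin.mono fun q hq =>
    (ofReal_max_sub_div_le_iff hp (hbot q) (dRho_pos hρ hq)).2 (h q))

lemma eventually_le_add_of_slopeRho_lt (hbot : ∀ q, f q ≠ ⊥) (hρ : 0 < ρ) (hp : f p ≠ ⊤)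
    (h : slopeRho f ρ p < γ) : ∀ᶠ q in 𝓝 p, f p ≤ f q + ((γ * dRho ρ q p : ℝ) : EReal) := by
  filter_upwards [eventually_nhdsWithin_iff.1 (eventually_lt_of_limsup_lt h)] with q hq
  rcases eq_or_ne q p with rfl | hne
  · simp [dRho_self]
  · exact (ofReal_max_sub_div_le_iff hp (hbot q) (dRho_pos hρ hne)).1 (hq hne).le

lemma nonlocalSlopeRho_le_iff (hρ : 0 < ρ) (hp : f p ≠ ⊤) :
    nonlocalSlopeRho f ρ p ≤ γ ↔
      ∀ q, f p ≤ max (f q) 0 + ((γ * dRho ρ q p : ℝ) : EReal) := by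
  have hquotient : ∀ q, q ≠ p →
      (ENNReal.ofReal (max (f p - max (f q) 0).toReal 0) / ENNReal.ofReal (dRho ρ p q) ≤ γ ↔
        f p ≤ max (f q) 0 + ((γ * dRho ρ q p : ℝ) : EReal)) := fun q hq => by
    rw [dRho_comm ρ p q]
    exact ofReal_max_sub_div_le_iff hp (ne_bot_of_le_ne_bot EReal.zero_ne_bot (le_max_right _ _))
      (dRho_pos hρ hq)
  rw [nonlocalSlopeRho, iSup₂_le_iff]
  refine ⟨fun h q => ?_, fun h q hq => (hquotient q hq).2 (h q)⟩
  rcases eq_or_ne q p with rfl | hne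
  · simp [dRho_self]
  · exact (hquotient q hne).1 (h q hne)

end Slopes

namespace ERealConvex

variable {X Y : Type*} [NormedAddCommGroup X] [NormedSpace ℝ X] [NormedAddCommGroup Y]
  [NormedSpace ℝ Y] {f : X × Y → EReal} {ρ : ℝ} {p : X × Y} {γ : ℝ≥0}

theorem slopeRho_le_iff (hf : ERealConvex f) (hρ : 0 < ρ) (hp : f p ≠ ⊤) :
    slopeRho f ρ p ≤ γ ↔ ∀ q, f p ≤ f q + ((γ * dRho ρ q p : ℝ) : EReal) := by
  refine ⟨fun h q => ?_, slopeRho_le_of_forall hf.ne_bot hρ hp⟩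
  refine le_add_coe_of_forall_pos_mul (b := dRho ρ q p) fun ε hε => ?_
  lift ε to ℝ≥0 using hε.le
  have hlt : slopeRho f ρ p < (γ + ε : ℝ≥0) :=
    h.trans_lt (ENNReal.coe_lt_coe.2 (lt_add_of_pos_right γ (NNReal.coe_pos.1 hε)))
  have hconvex : ConvexOn ℝ univ fun q => ((γ + ε : ℝ≥0) : ℝ) * dRho ρ q p :=
    (convexOn_dRho_left hρ.le p).smul (γ + ε).coe_nonneg
  rw [← add_mul, ← NNReal.coe_add]
  exact hf.le_add_of_eventually_le_add hconvex (by rw [dRho_self, mul_zero]) hp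
    (eventually_le_add_of_slopeRho_lt hf.ne_bot hρ hp hlt) q

theorem nonlocalSlopeRho_eq_slopeRho (hf : ERealConvex f) (hρ : 0 < ρ) (hp₀ : 0 < f p)
    (hp : f p ≠ ⊤) : nonlocalSlopeRho f ρ p = slopeRho f ρ p := by
  refine le_antisymm (ennreal_le_of_forall_nnreal_ge fun γ h => ?_)
    (ennreal_le_of_forall_nnreal_ge fun γ h => ?_)
  · rw [nonlocalSlopeRho_le_iff hρ hp]
    rw [hf.slopeRho_le_iff hρ hp] at h
    exact fun q => (h q).trans (add_le_add_left (le_max_left _ _) _)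
  · rw [nonlocalSlopeRho_le_iff hρ hp] at h
    rw [hf.slopeRho_le_iff hρ hp]
    exact hf.le_add_of_le_max_add ((convexOn_dRho_left hρ.le p).smul γ.coe_nonneg)
      (by simp [dRho_self]) hp₀ h

lemma le_mul_dRho_of_slopeRho_le (hf : ERealConvex f) (hρ : 0 < ρ) (hp : f p ≠ ⊤) {z : X × Y}
    (hz : f z ≤ 0) (h : slopeRho f ρ p ≤ γ) : f p ≤ ((γ * dRho ρ p z : ℝ) : EReal) := by
  rw [dRho_comm]
  simpa only [zero_add] using
    ((hf.slopeRho_le_iff hρ hp).1 h z).trans (add_le_add_left hz _)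

lemma ofReal_toReal_div_dRho_le_slopeRho (hf : ERealConvex f) (hρ : 0 < ρ) (hp : f p ≠ ⊤)
    {z : X × Y} (hz : f z ≤ 0) :
    ENNReal.ofReal (f p).toReal / ENNReal.ofReal (dRho ρ p z) ≤ slopeRho f ρ p :=
  ennreal_le_of_forall_nnreal_ge fun _ h =>
    ofReal_toReal_div_le (hf.le_mul_dRho_of_slopeRho_le hρ hp hz h)

theorem mem_prodFSubdiff_iff (hf : ERealConvex f) {s : (X →L[ℝ] ℝ) × (Y →L[ℝ] ℝ)} :
    s ∈ prodFSubdiff f p ↔ f p ≠ ⊤ ∧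
      ∀ q : X × Y, f p + ((s.1 (q.1 - p.1) + s.2 (q.2 - p.2) : ℝ) : EReal) ≤ f q := by
  refine and_congr_right fun hp => ⟨fun h q => ?_, fun h ε hε => .of_forall fun q => ?_⟩
  · rw [add_coe_le_iff_le_add_neg]
    refine le_add_coe_of_forall_pos_mul (b := ‖q - p‖) fun ε hε => ?_
    have hconvex : ConvexOn ℝ univ fun q : X × Y =>
        -(s.1 (q.1 - p.1) + s.2 (q.2 - p.2)) + ε * ‖q - p‖ := by
      have hlinear : ConvexOn ℝ univ fun q : X × Y => -(s.1.coprod s.2) q :=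
        (-(s.1.coprod s.2)).toLinearMap.convexOn convex_univ
      have hdist : ConvexOn ℝ univ fun q : X × Y => ε * dist q p :=
        (convexOn_univ_dist p).smul hε.le
      refine ((hlinear.add hdist).add_const ((s.1.coprod s.2) p)).congr fun q _ => ?_
      simp only [ContinuousLinearMap.coprod_apply, map_sub, dist_eq_norm, Pi.add_apply]
      ring
    refine hf.le_add_of_eventually_le_add hconvex (by simp) hp ?_ q
    filter_upwards [h ε hε] with q hq
    rwa [add_coe_le_iff_le_add_neg, neg_sub, sub_eq_neg_add] at hq
  · refine le_trans ?_ (h q)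
    gcongr
    exact sub_le_self _ (by positivity)

lemma slopeRho_le_of_mem_prodFSubdiff (hf : ERealConvex f) (hρ : 0 < ρ)
    {s : (X →L[ℝ] ℝ) × (Y →L[ℝ] ℝ)} (hs : s ∈ prodFSubdiff f p) {κ : ℝ≥0}
    (hs₁ : ‖s.1‖ ≤ γ) (hs₂ : ‖s.2‖ ≤ κ * ρ) : slopeRho f ρ p ≤ (γ + κ : ℝ≥0) := by
  obtain ⟨hp, hsub⟩ := hf.mem_prodFSubdiff_iff.1 hs
  rw [hf.slopeRho_le_iff hρ hp]
  intro q
  refine (add_coe_le_iff_le_add_neg.1 (hsub q)).trans (add_le_add_right ?_ _)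
  rw [EReal.coe_le_coe_iff]
  have hX : -s.1 (q.1 - p.1) ≤ γ * dRho ρ q p :=
    calc -s.1 (q.1 - p.1) ≤ ‖s.1‖ * ‖q.1 - p.1‖ := (neg_le_abs _).trans (s.1.le_opNorm _)
      _ ≤ γ * dRho ρ q p := by
        rw [← dist_eq_norm]
        gcongr
        exact le_max_left _ _
  have hY : -s.2 (q.2 - p.2) ≤ κ * dRho ρ q p :=
    calc -s.2 (q.2 - p.2) ≤ ‖s.2‖ * ‖q.2 - p.2‖ := (neg_le_abs _).trans (s.2.le_opNorm _)
      _ ≤ κ * (ρ * dist q.2 p.2) := by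
        rw [← dist_eq_norm, ← mul_assoc]
        gcongr
      _ ≤ κ * dRho ρ q p := by
        gcongr
        exact le_max_right _ _
  rw [NNReal.coe_add]
  linarith

lemma exists_mem_prodFSubdiff_of_slopeRho_le (hf : ERealConvex f) (hρ : 0 < ρ) (hp : f p ≠ ⊤)
    (h : slopeRho f ρ p ≤ γ) : ∃ s ∈ prodFSubdiff f p, ‖s.1‖ ≤ γ ∧ ‖s.2‖ ≤ γ * ρ := by
  obtain ⟨L, hL⟩ := hf.exists_subgradient_ge_neg hp
    ((convexOn_dRho_left hρ.le p).smul γ.coe_nonneg) ((continuous_dRho_left ρ p).const_smul (γ : ℝ))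
    (by simp [dRho_self]) ((hf.slopeRho_le_iff hρ hp).1 h)
  have hbound : ∀ v : X × Y, ‖L v‖ ≤ γ * max ‖v.1‖ (ρ * ‖v.2‖) := fun v => by
    have hplus := (hL (p + v)).2
    have hminus := (hL (p - v)).2
    simp only [dRho, smul_eq_mul, Prod.fst_add, Prod.snd_add, Prod.fst_sub, Prod.snd_sub,
      dist_self_add_left, dist_self_sub_left, add_sub_cancel_left, sub_sub_cancel_left,
      map_neg] at hplus hminus
    exact abs_le.2 ⟨hplus, by linarith⟩
  refine ⟨(L.comp (.inl ℝ X Y), L.comp (.inr ℝ X Y)), hf.mem_prodFSubdiff_iff.2 ⟨hp, fun q => ?_⟩,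
    ContinuousLinearMap.opNorm_le_bound _ γ.coe_nonneg fun x => ?_,
    ContinuousLinearMap.opNorm_le_bound _ (by positivity) fun y => ?_⟩
  · have hsplit : L (q.1 - p.1, 0) + L (0, q.2 - p.2) = L (q - p) := by
      rw [← map_add]; simp [← Prod.mk_sub_mk]
    simpa only [ContinuousLinearMap.comp_apply, ContinuousLinearMap.inl_apply,
      ContinuousLinearMap.inr_apply, hsplit] using (hL q).1
  · simpa using hbound (x, 0)
  · have hmax : max 0 (ρ * ‖y‖) = ρ * ‖y‖ := max_eq_right (by positivity)
    simpa [hmax, mul_assoc] using hbound (0, y)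

end ERealConvex

section OuterLimits

variable {X Y : Type*} [NormedAddCommGroup X] {f : X × Y → EReal} {xbar : X}

/-- The points over which the infima in the strict slopes at `(x̄, ȳ)` are taken. -/
def outerRegion (f : X × Y → EReal) (xbar : X) (ρ : ℝ) : Set (X × Y) :=
  {p | dist p.1 xbar < ρ ∧ 0 < f p ∧ f p < (ρ : EReal)}

/-- The limit `lim_{ρ↓0} inf {F_ρ(p) : p ∈ outerRegion f x̄ ρ}`, the common form of all strict
slopes. It is encoded as a supremum, as in the definitions of these slopes. -/
noncomputable def outerLimit (f : X × Y → EReal) (xbar : X) (F : ℝ → X × Y → ℝ≥0∞) : ℝ≥0∞ :=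
  ⨆ (ρ : ℝ) (_ : 0 < ρ), ⨅ (p : X × Y) (_ : p ∈ outerRegion f xbar ρ), F ρ p

lemma outerRegion_mono {ρ ρ₀ : ℝ} (h : ρ ≤ ρ₀) : outerRegion f xbar ρ ⊆ outerRegion f xbar ρ₀ :=
  fun _ hp => ⟨hp.1.trans_le h, hp.2.1, hp.2.2.trans_le (EReal.coe_le_coe_iff.2 h)⟩

lemma outerLimit_mono {F G : ℝ → X × Y → ℝ≥0∞} (h : ∀ ρ p, F ρ p ≤ G ρ p) :
    outerLimit f xbar F ≤ outerLimit f xbar G :=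
  iSup₂_mono fun ρ _ => iInf₂_mono fun p _ => h ρ p

lemma outerLimit_congr {F G : ℝ → X × Y → ℝ≥0∞}
    (h : ∀ ρ, 0 < ρ → ∀ p ∈ outerRegion f xbar ρ, F ρ p = G ρ p) :
    outerLimit f xbar F = outerLimit f xbar G :=
  biSup_congr fun ρ hρ => biInf_congr fun p hp => h ρ hρ p hp

lemma outerLimit_le_outerLimit {F G : ℝ → X × Y → ℝ≥0∞}
    (h : ∀ ρ₀ : ℝ, 0 < ρ₀ → ∀ γ δ : ℝ≥0, γ < δ → ∃ ρ : ℝ, 0 < ρ ∧ ρ ≤ ρ₀ ∧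
      ∀ p ∈ outerRegion f xbar ρ, G ρ p < γ → F ρ₀ p ≤ δ) :
    outerLimit f xbar F ≤ outerLimit f xbar G := by
  refine iSup₂_le fun ρ₀ hρ₀ => le_of_forall_gt_imp_ge_of_dense fun c hc => ?_
  obtain ⟨δ, hGδ, hδc⟩ := ENNReal.lt_iff_exists_nnreal_btwn.1 hc
  obtain ⟨γ, hGγ, hγδ⟩ := ENNReal.lt_iff_exists_nnreal_btwn.1 hGδ
  obtain ⟨ρ, hρ, hρρ₀, hFG⟩ := h ρ₀ hρ₀ γ δ (ENNReal.coe_lt_coe.1 hγδ)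
  have hinf : ⨅ (p : X × Y) (_ : p ∈ outerRegion f xbar ρ), G ρ p < γ :=
    (le_iSup₂_of_le ρ hρ le_rfl).trans_lt hGγ
  obtain ⟨p, hp, hGp⟩ : ∃ p, ∃ _ : p ∈ outerRegion f xbar ρ, G ρ p < γ := by
    simpa only [iInf_lt_iff] using hinf
  exact (iInf₂_le_of_le p (outerRegion_mono hρρ₀ hp) (hFG p hp hGp)).trans hδc.le

end OuterLimits

namespace ERealConvex

variable {X Y : Type*} [NormedAddCommGroup X] [NormedSpace ℝ X] [NormedAddCommGroup Y]
  [NormedSpace ℝ Y] {f : X × Y → EReal} {xbar : X} {ybar : Y}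

lemma outerLimit_slopeRho_le (hf : ERealConvex f) (g : X × Y → ℝ≥0∞) :
    outerLimit f xbar (fun ρ p => max (slopeRho f ρ p) (g p)) ≤
      outerLimit f xbar (fun ρ p => max (subdiffSlopeRho f ρ p) (g p)) := by
  refine outerLimit_le_outerLimit fun ρ₀ hρ₀ γ δ hγδ => ?_
  have hgap : 0 < ((δ - γ : ℝ≥0) : ℝ) := NNReal.coe_pos.2 (tsub_pos_of_lt hγδ)
  refine ⟨min ρ₀ ((δ - γ : ℝ≥0) * ρ₀), lt_min hρ₀ (mul_pos hgap hρ₀), min_le_left _ _,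
    fun p _ hp => ?_⟩
  obtain ⟨hsubdiff, hgp⟩ := max_lt_iff.1 hp
  refine max_le ?_ (hgp.le.trans (ENNReal.coe_le_coe.2 hγδ.le))
  simp only [subdiffSlopeRho, iInf_lt_iff] at hsubdiff
  obtain ⟨s, ⟨hs, hs₂⟩, hs₁⟩ := hsubdiff
  have hs₁' : ‖s.1‖ ≤ γ := by
    rw [ENNReal.ofReal, ENNReal.coe_lt_coe] at hs₁
    exact Real.toNNReal_le_iff_le_coe.1 hs₁.le
  simpa only [add_tsub_cancel_of_le hγδ.le] using
    hf.slopeRho_le_of_mem_prodFSubdiff hρ₀ hs hs₁' (hs₂.le.trans (min_le_right _ _))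

lemma outerLimit_subdiffSlopeRho_le (hf : ERealConvex f) (g : X × Y → ℝ≥0∞) :
    outerLimit f xbar (fun ρ p => max (subdiffSlopeRho f ρ p) (g p)) ≤
      outerLimit f xbar (fun ρ p => max (slopeRho f ρ p) (g p)) := by
  refine outerLimit_le_outerLimit fun ρ₀ hρ₀ γ δ hγδ => ?_
  have hγ₁ : 0 < (γ : ℝ) + 1 := by positivity
  have hρ : 0 < ρ₀ / (γ + 1) := div_pos hρ₀ hγ₁
  refine ⟨ρ₀ / (γ + 1), hρ, div_le_self hρ₀.le (by simp), fun p hp hp_lt => ?_⟩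
  obtain ⟨hslope, hgp⟩ := max_lt_iff.1 hp_lt
  obtain ⟨s, hs, hs₁, hs₂⟩ :=
    hf.exists_mem_prodFSubdiff_of_slopeRho_le hρ hp.2.2.ne_top hslope.le
  have hs₂' : ‖s.2‖ < ρ₀ :=
    calc ‖s.2‖ ≤ γ * (ρ₀ / (γ + 1)) := hs₂
      _ < (γ + 1) * (ρ₀ / (γ + 1)) := by gcongr; linarith
      _ = ρ₀ := mul_div_cancel₀ ρ₀ hγ₁.ne'
  have hsubdiff : subdiffSlopeRho f ρ₀ p ≤ γ :=
    iInf₂_le_of_le s ⟨hs, hs₂'⟩ (ENNReal.ofReal_le_coe.2 hs₁)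
  exact (max_le hsubdiff hgp.le).trans (ENNReal.coe_le_coe.2 hγδ.le)

theorem outerLimit_slopeRho_eq (hf : ERealConvex f) (g : X × Y → ℝ≥0∞) :
    outerLimit f xbar (fun ρ p => max (slopeRho f ρ p) (g p)) =
      outerLimit f xbar (fun ρ p => max (subdiffSlopeRho f ρ p) (g p)) :=
  (hf.outerLimit_slopeRho_le g).antisymm (hf.outerLimit_subdiffSlopeRho_le g)

theorem strictOuterSlope_eq_strictOuterSubdiffSlope (hf : ERealConvex f) :
    strictOuterSlope f xbar ybar = strictOuterSubdiffSlope f xbar ybar := by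
  have h := hf.outerLimit_slopeRho_eq (xbar := xbar) fun _ => 0
  simp only [zero_le, max_eq_left] at h
  exact h

theorem modStrictOuterSlope_eq_modStrictOuterSubdiffSlope (hf : ERealConvex f) :
    modStrictOuterSlope f xbar ybar = modStrictOuterSubdiffSlope f xbar ybar :=
  hf.outerLimit_slopeRho_eq _

theorem uniformStrictOuterSlope_eq_strictOuterSlope (hf : ERealConvex f) :
    uniformStrictOuterSlope f xbar ybar = strictOuterSlope f xbar ybar :=
  outerLimit_congr fun _ hρ _ hp => hf.nonlocalSlopeRho_eq_slopeRho hρ hp.2.1 hp.2.2.ne_top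

lemma le_mul_dist_of_slopeRho_le (hf : ERealConvex f) {ρ : ℝ} (hρ : 0 < ρ) {p : X × Y}
    (hp₀ : 0 < f p) (hp : f p ≠ ⊤) (hbar : f (xbar, ybar) ≤ 0) {c : ℝ}
    (hc : ((c * dist p.2 ybar : ℝ) : EReal) ≤ f p) {γ : ℝ≥0} (hγc : γ * ρ < c)
    (h : slopeRho f ρ p ≤ γ) : f p ≤ ((γ * dist p.1 xbar : ℝ) : EReal) := by
  obtain ⟨a, ha⟩ := hf.exists_eq_coe hp
  have hle := hf.le_mul_dRho_of_slopeRho_le hρ hp hbar h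
  rw [ha, EReal.coe_le_coe_iff] at hc hle
  rw [ha, EReal.coe_pos] at hp₀
  rw [ha, EReal.coe_le_coe_iff]
  rw [dRho, mul_max_of_nonneg _ _ γ.coe_nonneg, ← mul_assoc] at hle
  refine (le_max_iff.1 hle).resolve_right fun hY => ?_
  have hdist : dist p.2 ybar ≠ 0 := fun h₀ => by
    rw [h₀, mul_zero] at hY
    linarith
  have hdist_pos : 0 < dist p.2 ybar := dist_nonneg.lt_of_ne' hdist
  linarith [mul_lt_mul_of_pos_right hγc hdist_pos]

theorem modStrictOuterSlope_eq_strictOuterSlope (hf : ERealConvex f) (hbar : f (xbar, ybar) ≤ 0)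
    (hP2 : ∃ c : ℝ, 0 < c ∧ ∃ ε : ℝ, 0 < ε ∧ ∀ p : X × Y,
      0 < f p → f p < (ε : EReal) → ((c * dist p.2 ybar : ℝ) : EReal) ≤ f p) :
    modStrictOuterSlope f xbar ybar = strictOuterSlope f xbar ybar := by
  refine le_antisymm (outerLimit_le_outerLimit fun ρ₀ hρ₀ γ δ hγδ => ?_)
    (outerLimit_mono fun _ _ => le_max_left _ _)
  obtain ⟨c, hc, ε, hε, hgrowth⟩ := hP2
  have hγ₁ : 0 < (γ : ℝ) + 1 := by positivity
  set ρ := min (min ρ₀ ε) (c / (γ + 1))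
  have hρ : 0 < ρ := lt_min (lt_min hρ₀ hε) (div_pos hc hγ₁)
  have hρρ₀ : ρ ≤ ρ₀ := (min_le_left _ _).trans (min_le_left _ _)
  have hρε : ρ ≤ ε := (min_le_left _ _).trans (min_le_right _ _)
  have hγc : γ * ρ < c := by
    have hmul : ρ * (γ + 1) ≤ c := (le_div_iff₀ hγ₁).1 (min_le_right _ _)
    linarith
  refine ⟨ρ, hρ, hρρ₀, fun p hp hslope => ?_⟩
  have hle := hf.le_mul_dist_of_slopeRho_le hρ hp.2.1 hp.2.2.ne_top hbar
    (hgrowth p hp.2.1 (outerRegion_mono hρε hp).2.2) hγc hslope.le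
  exact (max_le ((slopeRho_antitone f p hρρ₀).trans hslope.le) (ofReal_toReal_div_le hle)).trans
    (ENNReal.coe_le_coe.2 hγδ.le)

end ERealConvex

theorem strict_slopes_eq_of_convex_general {X Y : Type*}
    [NormedAddCommGroup X] [NormedSpace ℝ X] [NormedAddCommGroup Y] [NormedSpace ℝ Y]
    (xbar : X) (ybar : Y) (f : X × Y → EReal) (hf : ERealConvex f) (hbar : f (xbar, ybar) ≤ 0)
    (hP2 : ∃ c : ℝ, 0 < c ∧ ∃ ε : ℝ, 0 < ε ∧ ∀ p : X × Y,
      0 < f p → f p < (ε : EReal) → ((c * dist p.2 ybar : ℝ) : EReal) ≤ f p) :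
    strictOuterSlope f xbar ybar = strictOuterSubdiffSlope f xbar ybar ∧
    modStrictOuterSlope f xbar ybar = modStrictOuterSubdiffSlope f xbar ybar ∧
    (∀ ρ : ℝ, 0 < ρ → ∀ p : X × Y, 0 < f p → f p < ⊤ →
      nonlocalSlopeRho f ρ p =
        max (slopeRho f ρ p)
          (ENNReal.ofReal ((f p).toReal) / ENNReal.ofReal (dRho ρ p (xbar, ybar)))) ∧
    uniformStrictOuterSlope f xbar ybar = modStrictOuterSlope f xbar ybar ∧
    modStrictOuterSlope f xbar ybar = strictOuterSlope f xbar ybar := by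
  have hmod : modStrictOuterSlope f xbar ybar = strictOuterSlope f xbar ybar :=
    hf.modStrictOuterSlope_eq_strictOuterSlope hbar hP2
  refine ⟨hf.strictOuterSlope_eq_strictOuterSubdiffSlope,
    hf.modStrictOuterSlope_eq_modStrictOuterSubdiffSlope, fun ρ hρ p hp₀ hp => ?_,
    hf.uniformStrictOuterSlope_eq_strictOuterSlope.trans hmod.symm, hmod⟩
  rw [hf.nonlocalSlopeRho_eq_slopeRho hρ hp₀ hp.ne,
    max_eq_left (hf.ofReal_toReal_div_dRho_le_slopeRho hρ hp.ne hbar)]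

/-- Proposition "Relationships between slopes", the convex case (v)(b):
if `f` is convex then the primal and subdifferential strict slopes coincide,
the nonlocal ρ-slope equals the maximum of the ρ-slope and the normalized value,
and the three primal strict slopes coincide. -/
theorem strict_slopes_eq_of_convex {X Y : Type*}
    [NormedAddCommGroup X] [NormedSpace ℝ X] [NormedAddCommGroup Y] [NormedSpace ℝ Y]
    (xbar : X) (ybar : Y) (f : X × Y → EReal)
    (hfbot : ∀ p : X × Y, f p ≠ ⊥)
    (hf0 : f (xbar, ybar) = 0)
    (hP1 : ∀ p : X × Y, p.2 ≠ ybar → 0 < f p)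
    (hP2 : ∃ c : ℝ, 0 < c ∧ ∃ ε : ℝ, 0 < ε ∧ ∀ p : X × Y,
      0 < f p → f p < (ε : EReal) → ((c * dist p.2 ybar : ℝ) : EReal) ≤ f p)
    (hconv : ∀ p q : X × Y, ∀ t : ℝ, 0 ≤ t → t ≤ 1 →
      f (t • p + (1 - t) • q) ≤ ((t : ℝ) : EReal) * f p + ((1 - t : ℝ) : EReal) * f q) :
    strictOuterSlope f xbar ybar = strictOuterSubdiffSlope f xbar ybar ∧
    modStrictOuterSlope f xbar ybar = modStrictOuterSubdiffSlope f xbar ybar ∧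
    (∀ ρ : ℝ, 0 < ρ → ∀ p : X × Y, 0 < f p → f p < ⊤ →
      nonlocalSlopeRho f ρ p =
        max (slopeRho f ρ p)
          (ENNReal.ofReal ((f p).toReal) / ENNReal.ofReal (dRho ρ p (xbar, ybar)))) ∧
    uniformStrictOuterSlope f xbar ybar = modStrictOuterSlope f xbar ybar ∧
    modStrictOuterSlope f xbar ybar = strictOuterSlope f xbar ybar := by
  exact strict_slopes_eq_of_convex_general xbar ybar f ⟨hfbot, hconv⟩ hf0.le hP2
end
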